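/- Let g_1, g_2 be binary morphisms on X = {a,b} with g_1(a) = a^s, |g_1(b)|_b = p, g_2(a) = a^t, |g_2(b)|_b = q, where g_1(b) = a^{γ_1} b a^{α_1} ⋯ b a^{α_{p-1}} b a^{γ_2}, g_2(b) = a^{δ_1} b a^{β_1} ⋯ b a^{β_{q-1}} b a^{δ_2}, s,t ≥ 1, p,q ≥ 2, all exponents nonnegative. Assume p = r^m and q = r^n for positive integers m, n, r. Then g_1 g_2 = g_2 g_1 if and only if at least one of: (i) g_1^n = g_2^m; (ii) g_1(b) and g_2(b) are both powers of b; (iii) g_1(a) = g_2(a) = a and g_1^n(b) and g_2^m(b) are a-conjugates. -/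

import Mathlib

/-- Words over the binary alphabet: `false` is the letter `a`, `true` is the letter `b`. -/
abbrev Word := List Bool

/-- The morphism of the free monoid determined by the images `g` of the letters. -/
def applyG (g : Bool → Word) (w : Word) : Word := w.flatMap g

/-- `a^n`. -/
def rep (n : ℕ) : Word := List.replicate n false

/-- `b a^{α 1} b a^{α 2} ⋯ b a^{α (p-1)} b`, a word with `p` occurrences of `b`. -/
def blockWord (p : ℕ) (α : ℕ → ℕ) : Word :=
  ((List.range (p - 1)).flatMap fun i => true :: rep (α (i + 1))) ++ [true]

/-- `w^k`. -/
def wordPow (w : Word) (k : ℕ) : Word := (List.replicate k w).flatten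

/-- `u` and `v` are `a`-conjugates. -/
def AConj (u v : Word) : Prop :=
  ∃ p q r s : ℕ, ∃ w : Word,
    u = rep p ++ w ++ rep q ∧ v = rep r ++ w ++ rep s ∧ p + q = r + s

/-- `w` is the infinite word `ω(g)`: for every `n`, the word obtained from `g^n(b)` by deleting
all occurrences of `a` preceding the first occurrence of `b` is a prefix of `w`. -/
def IsOmega (g : Bool → Word) (w : ℕ → Bool) : Prop :=
  ∀ n k : ℕ, ∀ hk : k < (((applyG g)^[n] [true]).dropWhile (fun x => !x)).length,
    (((applyG g)^[n] [true]).dropWhile (fun x => !x)).get ⟨k, hk⟩ = w k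

/-- `Aw w i` (for `i ≥ 1`): the number of occurrences of `a` in `w` strictly between the
`i`-th and `(i+1)`-th occurrences of `b` in `w`. -/
noncomputable def Aw (w : ℕ → Bool) (i : ℕ) : ℕ :=
  Nat.nth (fun n => w n = true) i - Nat.nth (fun n => w n = true) (i - 1) - 1

/-!
A word containing `b` is a gap sequence (the numbers of `a`s between consecutive `b`s) together
with its outer powers of `a`, and a morphism `G` with `G(a) = a^s` acts affinely on all of
these. Comparing the first gaps of `W ∘ P` and `P ∘ W` shows that commuting morphisms have the
same gaps as far as both are defined. Hence, up to outer `a`s, a morphism commuting with `W` is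
determined by its degree, the number of `b`s in its image of `b`, and by its image of `a`; if
moreover `W(a) ≠ a`, then the outer powers are fixed by an affine equation.

For the forward implication this is applied to `g₁^n` and `g₂^m`, which commute and have equal
degree; if their images of `a` differ, the affine equations force all exponents in the images of
`b` to vanish. In cases (i) and (iii) of the converse it is applied to `g₁ g₂` and `g₂ g₁`,
which both commute with `g₁^n = g₂^m`; in case (iii) this equality only holds after conjugating
both morphisms by powers of `a` so that their images of `b` start with `b`.
-/

open Set

lemma rep_add (a b : ℕ) : rep (a + b) = rep a ++ rep b :=
  List.replicate_add ..

lemma rep_inj {a b : ℕ} : rep a = rep b ↔ a = b := by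
  simp [rep]

lemma rep_append_true_cons_inj {a b : ℕ} {u v : Word} :
    rep a ++ true :: u = rep b ++ true :: v ↔ a = b ∧ u = v := by
  induction a generalizing b with
  | zero => cases b <;> simp [rep, List.replicate_succ]
  | succ a ih =>
    cases b with
    | zero => simp [rep, List.replicate_succ]
    | succ b => simpa [rep, List.replicate_succ] using ih (b := b)

/-- The word `a^A b a^{c 1} b ⋯ a^{c (k-1)} b a^B` with outer exponents `A`, `B` and gap sequence
`c`, of which only the values `c 1, …, c (k-1)` matter. -/
def gapWord (A k : ℕ) (c : ℕ → ℕ) (B : ℕ) : Word := rep A ++ blockWord k c ++ rep B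

section gapWord

variable {A A' B B' k l : ℕ} {c c' : ℕ → ℕ}

lemma gapWord_one : gapWord A 1 c B = rep A ++ true :: rep B := by
  simp [gapWord, blockWord]

lemma gapWord_succ (hk : 1 ≤ k) :
    gapWord A (k + 1) c B = rep A ++ true :: gapWord (c 1) k (fun j => c (j + 1)) B := by
  obtain ⟨k, rfl⟩ := Nat.exists_eq_add_of_le' hk
  simp [gapWord, blockWord, List.range_succ_eq_map, List.flatMap_map]

lemma gapWord_congr (h : EqOn c c' (Ioo 0 k)) : gapWord A k c B = gapWord A k c' B := by
  have hblocks : blockWord k c = blockWord k c' := by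
    refine congrArg (· ++ [true]) (List.flatMap_congr fun i hi => ?_)
    rw [List.mem_range] at hi
    rw [h ⟨i.succ_pos, by omega⟩]
  rw [gapWord, gapWord, hblocks]

lemma gapWord_inj (hk : 1 ≤ k) :
    gapWord A k c B = gapWord A' k c' B' ↔ A = A' ∧ B = B' ∧ EqOn c c' (Ioo 0 k) := by
  refine ⟨fun h => ?_, fun ⟨hA, hB, hc⟩ => hA ▸ hB ▸ gapWord_congr hc⟩
  induction k, hk using Nat.le_induction generalizing A A' c c' with
  | base =>
    rw [gapWord_one, gapWord_one, rep_append_true_cons_inj, rep_inj] at h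
    exact ⟨h.1, h.2, fun j hj => by have := hj.1; have := hj.2; omega⟩
  | succ k hk ih =>
    rw [gapWord_succ hk, gapWord_succ hk, rep_append_true_cons_inj] at h
    obtain ⟨hfirst, hB, hrest⟩ := ih h.2
    refine ⟨h.1, hB, fun j hj => ?_⟩
    obtain ⟨i, rfl⟩ := Nat.exists_eq_add_of_le' hj.1
    rcases i.eq_zero_or_pos with rfl | hi
    · exact hfirst
    · exact hrest ⟨hi, Nat.lt_of_succ_lt_succ hj.2⟩

lemma gapWord_append (hk : 1 ≤ k) (hl : 1 ≤ l) (hc : c k = B + A') :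
    gapWord A k c B ++ gapWord A' l (fun j => c (k + j)) B' = gapWord A (k + l) c B' := by
  induction k, hk using Nat.le_induction generalizing A c with
  | base =>
    rw [gapWord_one, Nat.add_comm 1 l, gapWord_succ hl, hc]
    simp [gapWord, rep_add, Nat.add_comm 1]
  | succ k hk ih =>
    rw [gapWord_succ hk, Nat.add_right_comm, gapWord_succ (by omega), ← ih hc]
    simp [Nat.add_right_comm]

lemma rep_append_gapWord_append_rep (x y : ℕ) :
    rep x ++ gapWord A k c B ++ rep y = gapWord (x + A) k c (B + y) := by
  simp [gapWord, rep_add]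

lemma AConj.add_eq_add_and_eqOn (hk : 1 ≤ k) (h : AConj (gapWord A k c B) (gapWord A' k c' B')) :
    A + B = A' + B' ∧ EqOn c c' (Ioo 0 k) := by
  obtain ⟨x, y, z, v, w, hu, hv, hlen⟩ := h
  have hpad : rep z ++ gapWord A k c B ++ rep v = rep x ++ gapWord A' k c' B' ++ rep y := by
    calc rep z ++ gapWord A k c B ++ rep v
        = (rep z ++ rep x) ++ w ++ (rep y ++ rep v) := by simp [hu]
      _ = (rep x ++ rep z) ++ w ++ (rep v ++ rep y) := by
        simp only [← rep_add, Nat.add_comm]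
      _ = rep x ++ gapWord A' k c' B' ++ rep y := by simp [hv]
  rw [rep_append_gapWord_append_rep, rep_append_gapWord_append_rep, gapWord_inj hk] at hpad
  exact ⟨by omega, hpad.2.2⟩

end gapWord

lemma applyG_append (g : Bool → Word) (u v : Word) :
    applyG g (u ++ v) = applyG g u ++ applyG g v :=
  List.flatMap_append

lemma applyG_singleton (g : Bool → Word) (x : Bool) : applyG g [x] = g x :=
  List.flatMap_singleton ..

lemma applyG_replicate {g : Bool → Word} {x : Bool} {k : ℕ} (h : g x = List.replicate k x) (l : ℕ) :
    applyG g (List.replicate l x) = List.replicate (l * k) x := by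
  simp [applyG, List.flatMap_replicate, h]

lemma applyG_comp_applyG (g h : Bool → Word) : applyG g ∘ applyG h = applyG (applyG g ∘ h) :=
  funext fun _ => List.flatMap_assoc

lemma applyG_injective : Function.Injective applyG := fun g h hgh =>
  funext fun x => by simpa only [applyG_singleton] using congrFun hgh [x]

lemma commute_applyG_of_forall_eq_replicate {g h : Bool → Word}
    (hg : ∀ x, ∃ k, g x = List.replicate k x) (hh : ∀ x, ∃ l, h x = List.replicate l x) :
    Function.Commute (applyG g) (applyG h) := by
  choose k hk using hg
  choose l hl using hh
  refine congrFun (?_ : applyG g ∘ applyG h = applyG h ∘ applyG g)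
  rw [applyG_comp_applyG, applyG_comp_applyG]
  congr 1
  funext x
  simp only [Function.comp_apply]
  rw [hl, hk, applyG_replicate (hk x), applyG_replicate (hl x), Nat.mul_comm]

lemma eq_of_mul_add_eq_add {w c d x y : ℕ} (hw : w ≠ 1) (hx : w * x + c = d + x)
    (hy : w * y + c = d + y) : x = y := by
  zify at *
  exact mul_left_cancel₀ (sub_ne_zero.mpr hw) (by linear_combination hx - hy)

lemma eq_zero_of_mul_add_eq_of_ne {S T d e c : ℕ} (hS : 1 ≤ S) (hT : 1 ≤ T) (hne : S ≠ T)
    (houter : S * e + d = T * d + e) (hgap : d + S * c = e + T * c) : d = 0 ∧ e = 0 ∧ c = 0 := by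
  obtain ⟨S, rfl⟩ := Nat.exists_eq_add_of_le' hS
  obtain ⟨T, rfl⟩ := Nat.exists_eq_add_of_le' hT
  have hd : d + S * c = 0 := by
    zify at *
    exact mul_left_cancel₀ (sub_ne_zero.mpr hne) (by linear_combination houter + (S : ℤ) * hgap)
  have he : e + T * c = 0 := by
    zify at *
    exact mul_left_cancel₀ (sub_ne_zero.mpr hne) (by linear_combination houter + (T : ℤ) * hgap)
  have hc : c = 0 := by
    by_contra hc
    have hS0 : S = 0 := by simpa [hc] using (Nat.add_eq_zero_iff.mp hd).2
    have hT0 : T = 0 := by simpa [hc] using (Nat.add_eq_zero_iff.mp he).2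
    exact hne (by rw [hS0, hT0])
  exact ⟨by omega, by omega, hc⟩

/-- Parameters of the binary morphism `a ↦ a^slope`,
`b ↦ a^left b a^{gap 1} b ⋯ a^{gap (deg-1)} b a^right`. Only the values of `gap` strictly between
`0` and `deg` matter, so different parameters may give the same morphism. -/
structure GapMorphism where
  slope : ℕ
  left : ℕ
  right : ℕ
  deg : ℕ
  gap : ℕ → ℕ
  deg_pos : 1 ≤ deg

namespace GapMorphism

variable (G H : GapMorphism)

/-- The images of the two letters under the morphism with parameters `G`. -/
def images : Bool → Word
  | false => rep G.slope
  | true => gapWord G.left G.deg G.gap G.right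

/-- The morphism of the free monoid with parameters `G`. -/
def hom : Word → Word := applyG G.images

variable {G H} in
lemma hom_eq_iff (hdeg : G.deg = H.deg) :
    G.hom = H.hom ↔ G.slope = H.slope ∧ G.left = H.left ∧ G.right = H.right ∧
      EqOn G.gap H.gap (Ioo 0 G.deg) := by
  rw [hom, hom, applyG_injective.eq_iff, funext_iff, Bool.forall_bool]
  simp only [images]
  rw [rep_inj, ← hdeg, gapWord_inj G.deg_pos]

/-- The action of the morphism `G` on gap sequences of words. -/
def gapMap (x : ℕ → ℕ) (j : ℕ) : ℕ :=
  if G.deg ∣ j then G.right + G.slope * x (j / G.deg) + G.left else G.gap (j % G.deg)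

lemma gapMap_deg_mul (x : ℕ → ℕ) (j : ℕ) :
    G.gapMap x (G.deg * j) = G.right + G.slope * x j + G.left := by
  rw [gapMap, if_pos (Nat.dvd_mul_right ..), Nat.mul_div_cancel_left _ G.deg_pos]

lemma gapMap_deg_add (x : ℕ → ℕ) (j : ℕ) :
    G.gapMap x (G.deg + j) = G.gapMap (fun i => x (i + 1)) j := by
  simp [gapMap, Nat.add_div_left _ G.deg_pos]

lemma eqOn_gapMap_gap (x : ℕ → ℕ) : EqOn (G.gapMap x) G.gap (Ioo 0 G.deg) := fun j hj => by
  rw [gapMap, if_neg (Nat.not_dvd_of_pos_of_lt hj.1 hj.2), Nat.mod_eq_of_lt hj.2]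

lemma hom_rep (n : ℕ) : G.hom (rep n) = rep (G.slope * n) := by
  rw [Nat.mul_comm]
  exact applyG_replicate (g := G.images) rfl n

lemma hom_rep_append_true_cons (A : ℕ) (c : ℕ → ℕ) (u : Word) :
    G.hom (rep A ++ true :: u) =
      gapWord (G.slope * A + G.left) G.deg (G.gapMap c) G.right ++ G.hom u := by
  have htrue : G.hom [true] = gapWord G.left G.deg (G.gapMap c) G.right :=
    (applyG_singleton ..).trans (gapWord_congr (G.eqOn_gapMap_gap c)).symm
  calc
    G.hom (rep A ++ true :: u) = G.hom (rep A) ++ G.hom [true] ++ G.hom u := by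
      simp only [hom, ← applyG_append, List.append_assoc, List.singleton_append]
    _ = gapWord (G.slope * A + G.left) G.deg (G.gapMap c) G.right ++ G.hom u := by
      rw [hom_rep, htrue]
      simp [gapWord, rep_add]

lemma hom_gapWord {k : ℕ} (hk : 1 ≤ k) (A : ℕ) (c : ℕ → ℕ) (B : ℕ) :
    G.hom (gapWord A k c B) =
      gapWord (G.slope * A + G.left) (G.deg * k) (G.gapMap c) (G.slope * B + G.right) := by
  induction k, hk using Nat.le_induction generalizing A c with
  | base =>
    rw [gapWord_one, hom_rep_append_true_cons _ A c, hom_rep, Nat.mul_one, Nat.add_comm _ G.right]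
    simp [gapWord, rep_add]
  | succ k hk ih =>
    have hjoin : G.gapMap c G.deg = G.right + (G.slope * c 1 + G.left) := by
      rw [← Nat.add_assoc, ← gapMap_deg_mul, Nat.mul_one]
    rw [gapWord_succ hk, hom_rep_append_true_cons _ A c, ih, Nat.mul_succ, Nat.add_comm (G.deg * k),
      ← gapWord_append G.deg_pos (Nat.mul_pos G.deg_pos hk) hjoin]
    simp only [gapMap_deg_add]

/-- Parameters of the composite morphism `w ↦ G(H(w))`. -/
@[simps slope left right deg]
def comp : GapMorphism where
  slope := G.slope * H.slope
  left := G.slope * H.left + G.left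
  right := G.slope * H.right + G.right
  deg := G.deg * H.deg
  gap := G.gapMap H.gap
  deg_pos := Nat.mul_pos G.deg_pos H.deg_pos

lemma hom_comp : (G.comp H).hom = G.hom ∘ H.hom := by
  rw [hom, hom, hom, applyG_comp_applyG]
  congr 1
  funext x
  cases x
  · exact (G.hom_rep _).symm
  · exact (G.hom_gapWord H.deg_pos ..).symm

/-- Parameters of the `n`-fold composite of the morphism `G`. -/
def iterate : ℕ → GapMorphism
  | 0 => ⟨1, 0, 0, 1, 0, le_rfl⟩
  | n + 1 => G.comp (iterate n)

lemma slope_iterate (n : ℕ) : (G.iterate n).slope = G.slope ^ n := by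
  induction n with
  | zero => rfl
  | succ n ih => rw [iterate, comp_slope, ih, pow_succ']

lemma deg_iterate (n : ℕ) : (G.iterate n).deg = G.deg ^ n := by
  induction n with
  | zero => rfl
  | succ n ih => rw [iterate, comp_deg, ih, pow_succ']

lemma hom_iterate (n : ℕ) : (G.iterate n).hom = G.hom^[n] := by
  induction n with
  | zero =>
    funext w
    have hletters : (G.iterate 0).images = fun x => [x] := by
      funext x
      cases x <;> rfl
    rw [hom, hletters]
    exact List.flatMap_singleton' w
  | succ n ih => rw [iterate, hom_comp, ih, Function.iterate_succ']

variable {G H}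

lemma slope_eq_one_of_iterate {n : ℕ} (hn : 0 < n) (h : (G.iterate n).slope = 1) : G.slope = 1 := by
  rwa [slope_iterate, Nat.pow_eq_one, or_iff_left hn.ne'] at h

lemma two_le_deg_iterate {n : ℕ} (hG : 2 ≤ G.deg) (hn : 0 < n) : 2 ≤ (G.iterate n).deg :=
  hG.trans ((Nat.le_self_pow hn.ne' _).trans_eq (G.deg_iterate n).symm)

lemma commute_hom_iff : Function.Commute G.hom H.hom ↔
    G.slope * H.left + G.left = H.slope * G.left + H.left ∧
    G.slope * H.right + G.right = H.slope * G.right + H.right ∧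
    EqOn (G.gapMap H.gap) (H.gapMap G.gap) (Ioo 0 (G.deg * H.deg)) := by
  have hcomp : Function.Commute G.hom H.hom ↔ (G.comp H).hom = (H.comp G).hom := by
    rw [hom_comp, hom_comp, funext_iff]
    rfl
  rw [hcomp, hom_eq_iff (Nat.mul_comm ..)]
  simp only [comp_slope, comp_left, comp_right, comp_deg, Nat.mul_comm G.slope, true_and]
  rfl

lemma gap_eq_gap_of_commute (h : Function.Commute G.hom H.hom) {j : ℕ} (hj : 0 < j)
    (hjG : j < G.deg) (hjH : j < H.deg) : G.gap j = H.gap j := by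
  have hgap := (commute_hom_iff.mp h).2.2
    ⟨hj, hjG.trans_le (Nat.le_mul_of_pos_right _ H.deg_pos)⟩
  rwa [G.eqOn_gapMap_gap _ ⟨hj, hjG⟩, H.eqOn_gapMap_gap _ ⟨hj, hjH⟩] at hgap

section Centralizer

variable {W P Q : GapMorphism}

lemma eqOn_gap_of_commute (hW : 2 ≤ W.deg) (hP : Function.Commute W.hom P.hom)
    (hQ : Function.Commute W.hom Q.hom) (hdeg : P.deg = Q.deg) :
    EqOn P.gap Q.gap (Ioo 0 P.deg) := fun j hj => by
  have hlong : j < (W.iterate P.deg).deg :=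
    hj.2.trans ((Nat.lt_pow_self hW).trans_eq (W.deg_iterate _).symm)
  have hWP : Function.Commute (W.iterate P.deg).hom P.hom := by
    rw [hom_iterate]
    exact hP.iterate_left _
  have hWQ : Function.Commute (W.iterate P.deg).hom Q.hom := by
    rw [hom_iterate]
    exact hQ.iterate_left _
  rw [← gap_eq_gap_of_commute hWP hj.1 hlong hj.2,
    gap_eq_gap_of_commute hWQ hj.1 hlong (hdeg ▸ hj.2)]

lemma hom_eq_of_commute (hW : 2 ≤ W.deg) (hWs : W.slope ≠ 1) (hP : Function.Commute W.hom P.hom)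
    (hQ : Function.Commute W.hom Q.hom) (hslope : P.slope = Q.slope) (hdeg : P.deg = Q.deg) :
    P.hom = Q.hom := by
  obtain ⟨hPl, hPr, -⟩ := commute_hom_iff.mp hP
  obtain ⟨hQl, hQr, -⟩ := commute_hom_iff.mp hQ
  rw [← hslope] at hQl hQr
  exact (hom_eq_iff hdeg).mpr ⟨hslope, eq_of_mul_add_eq_add hWs hPl hQl,
    eq_of_mul_add_eq_add hWs hPr hQr, eqOn_gap_of_commute hW hP hQ hdeg⟩

end Centralizer

/-- The condition that the morphism sends `b` to a power of `b`. -/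
def IsPure (G : GapMorphism) : Prop := G.left = 0 ∧ G.right = 0 ∧ EqOn G.gap 0 (Ioo 0 G.deg)

lemma IsPure.exists_images_true_eq_replicate (h : G.IsPure) :
    ∃ k, G.images true = List.replicate k true := by
  refine ⟨G.deg, ?_⟩
  obtain ⟨hl, hr, hgap⟩ := h
  obtain ⟨k, hk⟩ := Nat.exists_eq_add_of_le' G.deg_pos
  rw [images, hl, hr, gapWord_congr hgap, hk]
  simp [gapWord, blockWord, rep, List.replicate_succ', ← List.map_eq_flatMap]

lemma IsPure.of_comp (h : (G.comp H).IsPure) : G.IsPure := by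
  obtain ⟨hl, hr, hgap⟩ := h
  simp only [comp_left, comp_right, comp_deg, Nat.add_eq_zero_iff] at hl hr hgap
  refine ⟨hl.2, hr.2, (G.eqOn_gapMap_gap H.gap).symm.trans (hgap.mono ?_)⟩
  exact Ioo_subset_Ioo_right (Nat.le_mul_of_pos_right _ H.deg_pos)

lemma IsPure.of_iterate {n : ℕ} (hn : 0 < n) (h : (G.iterate n).IsPure) : G.IsPure := by
  obtain ⟨n, rfl⟩ := Nat.exists_eq_add_of_le' hn
  exact h.of_comp

section EqualDegree

variable {U V : GapMorphism}

lemma left_add_right_add_eq_of_commute (h : Function.Commute U.hom V.hom) (hdeg : U.deg = V.deg)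
    {j : ℕ} (hj : j ∈ Ioo 0 U.deg) :
    U.left + U.right + U.slope * U.gap j = V.left + V.right + V.slope * U.gap j := by
  have hgap := (commute_hom_iff.mp h).2.2 (x := U.deg * j)
    ⟨Nat.mul_pos U.deg_pos hj.1, Nat.mul_lt_mul_of_pos_left (hdeg ▸ hj.2) U.deg_pos⟩
  rw [gapMap_deg_mul, hdeg, gapMap_deg_mul,
    ← gap_eq_gap_of_commute h hj.1 hj.2 (hdeg ▸ hj.2)] at hgap
  omega

lemma isPure_of_commute_of_slope_ne (h : Function.Commute U.hom V.hom) (hdeg : U.deg = V.deg)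
    (hU : 2 ≤ U.deg) (hUs : 1 ≤ U.slope) (hVs : 1 ≤ V.slope) (hne : U.slope ≠ V.slope) :
    U.IsPure ∧ V.IsPure := by
  obtain ⟨hl, hr, -⟩ := commute_hom_iff.mp h
  have hzero {j : ℕ} (hj : j ∈ Ioo 0 U.deg) :
      U.left + U.right = 0 ∧ V.left + V.right = 0 ∧ U.gap j = 0 :=
    eq_zero_of_mul_add_eq_of_ne hUs hVs hne (by linarith)
      (left_add_right_add_eq_of_commute h hdeg hj)
  obtain ⟨hUo, hVo, -⟩ := hzero (j := 1) ⟨one_pos, hU⟩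
  rw [Nat.add_eq_zero_iff] at hUo hVo
  have hUgap : EqOn U.gap 0 (Ioo 0 U.deg) := fun j hj => (hzero hj).2.2
  refine ⟨⟨hUo.1, hUo.2, hUgap⟩, hVo.1, hVo.2, ?_⟩
  rw [← hdeg]
  exact (eqOn_gap_of_commute hU (.refl _) h hdeg).symm.trans hUgap

lemma aConj_of_commute_of_slope_eq (h : Function.Commute U.hom V.hom) (hdeg : U.deg = V.deg)
    (hU : 2 ≤ U.deg) (hslope : U.slope = V.slope) : AConj (U.hom [true]) (V.hom [true]) := by
  have houter := left_add_right_add_eq_of_commute h hdeg (j := 1) ⟨one_pos, hU⟩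
  rw [hslope, Nat.add_right_cancel_iff] at houter
  simp only [hom, applyG_singleton, images]
  rw [gapWord_congr (eqOn_gap_of_commute hU (.refl _) h hdeg), hdeg]
  exact ⟨_, _, _, _, _, rfl, rfl, houter⟩

end EqualDegree

variable (G H) in
/-- The conjugate of the morphism by a power of `a` whose image of `b` starts with `b`. -/
def normalize : GapMorphism := { G with left := 0, right := G.left + G.right }

variable (G H) in
lemma normalize_comp : (G.comp H).normalize = G.normalize.comp H.normalize := by
  have hgap : (G.comp H).gap = G.normalize.gapMap H.gap := by
    funext j
    simp only [comp, gapMap, normalize, Nat.add_zero]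
    congr 1
    ring
  simp only [normalize, comp, mk.injEq, true_and] at hgap ⊢
  exact ⟨rfl, by ring, hgap⟩

variable (G) in
lemma normalize_iterate (n : ℕ) : (G.iterate n).normalize = G.normalize.iterate n := by
  induction n with
  | zero => rfl
  | succ n ih => rw [iterate, normalize_comp, ih, iterate]

lemma hom_normalize_eq_of_aConj (hdeg : G.deg = H.deg) (hslope : G.slope = H.slope)
    (h : AConj (G.hom [true]) (H.hom [true])) : G.normalize.hom = H.normalize.hom := by
  simp only [hom, applyG_singleton, images] at h
  rw [← hdeg] at h
  obtain ⟨houter, hgap⟩ := h.add_eq_add_and_eqOn G.deg_pos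
  exact (hom_eq_iff (G := G.normalize) (H := H.normalize) hdeg).mpr ⟨hslope, rfl, houter, hgap⟩

section CommonPower

variable {m n : ℕ}

lemma commute_iterate_comp (h : G.hom^[n] = H.hom^[m]) :
    Function.Commute (G.iterate n).hom (G.comp H).hom ∧
      Function.Commute (G.iterate n).hom (H.comp G).hom := by
  have hG : Function.Commute G.hom^[n] G.hom := (Function.Commute.refl _).iterate_left n
  have hH : Function.Commute G.hom^[n] H.hom := h ▸ (Function.Commute.refl _).iterate_left m
  rw [hom_iterate, hom_comp, hom_comp]
  exact ⟨hG.comp_right hH, hH.comp_right hG⟩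

lemma eqOn_gapMap_of_iterate_eq (hG : 2 ≤ G.deg) (hn : 0 < n) (h : G.hom^[n] = H.hom^[m]) :
    EqOn (G.gapMap H.gap) (H.gapMap G.gap) (Ioo 0 (G.deg * H.deg)) := by
  obtain ⟨hGH, hHG⟩ := commute_iterate_comp h
  exact eqOn_gap_of_commute (two_le_deg_iterate hG hn) hGH hHG (Nat.mul_comm ..)

lemma commute_of_iterate_normalize_eq (hG : 2 ≤ G.deg) (hn : 0 < n) (hGs : G.slope = 1)
    (hHs : H.slope = 1) (h : (G.iterate n).normalize.hom = (H.iterate m).normalize.hom) :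
    Function.Commute G.hom H.hom := by
  rw [normalize_iterate, normalize_iterate, hom_iterate, hom_iterate] at h
  have hgap : EqOn (G.comp H).normalize.gap (H.comp G).normalize.gap (Ioo 0 (G.deg * H.deg)) := by
    rw [normalize_comp, normalize_comp]
    exact eqOn_gapMap_of_iterate_eq (G := G.normalize) hG hn h
  exact commute_hom_iff.mpr ⟨by rw [hGs, hHs]; ring, by rw [hGs, hHs]; ring, hgap⟩

lemma commute_of_iterate_eq (hG : 2 ≤ G.deg) (hm : 0 < m) (hn : 0 < n)
    (hdeg : G.deg ^ n = H.deg ^ m) (h : G.hom^[n] = H.hom^[m]) :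
    Function.Commute G.hom H.hom := by
  have hiter : (G.iterate n).hom = (H.iterate m).hom := by rw [hom_iterate, hom_iterate, h]
  have hdeg_iter : (G.iterate n).deg = (H.iterate m).deg := by rw [deg_iterate, deg_iterate, hdeg]
  obtain ⟨hslope, -⟩ := (hom_eq_iff hdeg_iter).mp hiter
  by_cases hone : (G.iterate n).slope = 1
  · have hGs : G.slope = 1 := slope_eq_one_of_iterate hn hone
    have hHs : H.slope = 1 := slope_eq_one_of_iterate hm (hslope ▸ hone)
    refine commute_hom_iff.mpr ⟨by rw [hGs, hHs]; ring, by rw [hGs, hHs]; ring, ?_⟩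
    exact eqOn_gapMap_of_iterate_eq hG hn h
  · obtain ⟨hGH, hHG⟩ := commute_iterate_comp h
    have hcomp := hom_eq_of_commute (two_le_deg_iterate hG hn) hone hGH hHG (Nat.mul_comm ..)
      (Nat.mul_comm ..)
    rw [hom_comp, hom_comp] at hcomp
    exact congrFun hcomp

lemma iterate_eq_or_isPure_or_aConj_of_commute (hGs : 1 ≤ G.slope) (hHs : 1 ≤ H.slope)
    (hG : 2 ≤ G.deg) (hm : 0 < m) (hn : 0 < n) (hdeg : G.deg ^ n = H.deg ^ m)
    (h : Function.Commute G.hom H.hom) :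
    G.hom^[n] = H.hom^[m] ∨ (G.IsPure ∧ H.IsPure) ∨
      (G.slope = 1 ∧ H.slope = 1 ∧ AConj (G.hom^[n] [true]) (H.hom^[m] [true])) := by
  have hcomm : Function.Commute (G.iterate n).hom (H.iterate m).hom := by
    rw [hom_iterate, hom_iterate]
    exact (h.iterate_left n).iterate_right m
  have hdeg_iter : (G.iterate n).deg = (H.iterate m).deg := by rw [deg_iterate, deg_iterate, hdeg]
  have htwo := two_le_deg_iterate hG hn
  rw [← hom_iterate, ← hom_iterate]
  rcases ne_or_eq (G.iterate n).slope (H.iterate m).slope with hne | hslope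
  · obtain ⟨hGpure, hHpure⟩ := isPure_of_commute_of_slope_ne hcomm hdeg_iter htwo
      (slope_iterate G n ▸ Nat.one_le_pow _ _ hGs) (slope_iterate H m ▸ Nat.one_le_pow _ _ hHs) hne
    exact .inr (.inl ⟨hGpure.of_iterate hn, hHpure.of_iterate hm⟩)
  · by_cases hone : (G.iterate n).slope = 1
    · refine .inr (.inr ⟨slope_eq_one_of_iterate hn hone, ?_, ?_⟩)
      · exact slope_eq_one_of_iterate hm (hslope ▸ hone)
      · exact aConj_of_commute_of_slope_eq hcomm hdeg_iter htwo hslope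
    · exact .inl (hom_eq_of_commute htwo hone (.refl _) hcomm hslope hdeg_iter)

end CommonPower

theorem commute_hom_iff_of_deg_pow_eq {m n : ℕ} (hGs : 1 ≤ G.slope) (hHs : 1 ≤ H.slope)
    (hG : 2 ≤ G.deg) (hm : 0 < m) (hn : 0 < n) (hdeg : G.deg ^ n = H.deg ^ m) :
    Function.Commute G.hom H.hom ↔
      G.hom^[n] = H.hom^[m] ∨
      ((∃ k, G.images true = List.replicate k true) ∧
        ∃ k, H.images true = List.replicate k true) ∨
      (G.slope = 1 ∧ H.slope = 1 ∧ AConj (G.hom^[n] [true]) (H.hom^[m] [true])) := by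
  constructor
  · intro h
    refine (iterate_eq_or_isPure_or_aConj_of_commute hGs hHs hG hm hn hdeg h).imp_right
      (Or.imp_left (And.imp ?_ ?_)) <;> exact IsPure.exists_images_true_eq_replicate
  · rintro (h | ⟨hGb, hHb⟩ | ⟨hGs, hHs, hconj⟩)
    · exact commute_of_iterate_eq hG hm hn hdeg h
    · exact commute_applyG_of_forall_eq_replicate (Bool.forall_bool.mpr ⟨⟨_, rfl⟩, hGb⟩)
        (Bool.forall_bool.mpr ⟨⟨_, rfl⟩, hHb⟩)
    · refine commute_of_iterate_normalize_eq hG hn hGs hHs (m := m) ?_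
      rw [← hom_iterate, ← hom_iterate] at hconj
      exact hom_normalize_eq_of_aConj (by rw [deg_iterate, deg_iterate, hdeg])
        (by rw [slope_iterate, slope_iterate, hGs, hHs, one_pow, one_pow]) hconj

end GapMorphism

theorem stmt13_general (s t : ℕ) (hs : 1 ≤ s) (ht : 1 ≤ t)
    (p q : ℕ) (hp : 2 ≤ p)
    (γ₁ γ₂ δ₁ δ₂ : ℕ) (α β : ℕ → ℕ)
    (g₁ g₂ : Bool → Word)
    (h₁a : g₁ false = rep s)
    (h₁b : g₁ true = rep γ₁ ++ blockWord p α ++ rep γ₂)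
    (h₂a : g₂ false = rep t)
    (h₂b : g₂ true = rep δ₁ ++ blockWord q β ++ rep δ₂)
    (m n : ℕ) (hm : 0 < m) (hn : 0 < n) (hpq : p ^ n = q ^ m) :
    applyG g₁ ∘ applyG g₂ = applyG g₂ ∘ applyG g₁ ↔
      ((applyG g₁)^[n] = (applyG g₂)^[m]) ∨
      ((∃ k : ℕ, g₁ true = List.replicate k true) ∧
        (∃ k : ℕ, g₂ true = List.replicate k true)) ∨
      (g₁ false = [false] ∧ g₂ false = [false] ∧
        AConj ((applyG g₁)^[n] [true]) ((applyG g₂)^[m] [true])) := by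
  have hp_pos : 1 ≤ p := one_le_two.trans hp
  have hq_pos : 1 ≤ q := (pow_pos_iff hm.ne').mp (hpq ▸ pow_pos hp_pos n)
  let G : GapMorphism := ⟨s, γ₁, γ₂, p, α, hp_pos⟩
  let H : GapMorphism := ⟨t, δ₁, δ₂, q, β, hq_pos⟩
  obtain rfl : g₁ = G.images := funext (Bool.forall_bool.mpr ⟨h₁a, h₁b⟩)
  obtain rfl : g₂ = H.images := funext (Bool.forall_bool.mpr ⟨h₂a, h₂b⟩)
  have hiff := GapMorphism.commute_hom_iff_of_deg_pow_eq (G := G) (H := H) hs ht hp hm hn hpq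
  rw [← rep_inj (b := 1), ← rep_inj (b := 1)] at hiff
  exact funext_iff.trans hiff

/-- if `p = r^m`, `q = r^n` then `g₁g₂ = g₂g₁` iff `g₁^n = g₂^m`, or both
`g₁(b)`, `g₂(b)` are powers of `b`, or `g₁(a)=g₂(a)=a` and `g₁^n(b)`, `g₂^m(b)` are
`a`-conjugates. -/
theorem stmt13 (s t : ℕ) (hs : 1 ≤ s) (ht : 1 ≤ t)
    (p q : ℕ) (hp : 2 ≤ p) (hq : 2 ≤ q)
    (γ₁ γ₂ δ₁ δ₂ : ℕ) (α β : ℕ → ℕ)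
    (g₁ g₂ : Bool → Word)
    (h₁a : g₁ false = rep s)
    (h₁b : g₁ true = rep γ₁ ++ blockWord p α ++ rep γ₂)
    (h₂a : g₂ false = rep t)
    (h₂b : g₂ true = rep δ₁ ++ blockWord q β ++ rep δ₂)
    (m n r : ℕ) (hm : 0 < m) (hn : 0 < n) (hr : 0 < r)
    (hpr : p = r ^ m) (hqr : q = r ^ n) :
    applyG g₁ ∘ applyG g₂ = applyG g₂ ∘ applyG g₁ ↔
      ((applyG g₁)^[n] = (applyG g₂)^[m]) ∨
      ((∃ k : ℕ, g₁ true = List.replicate k true) ∧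
        (∃ k : ℕ, g₂ true = List.replicate k true)) ∨
      (g₁ false = [false] ∧ g₂ false = [false] ∧
        AConj ((applyG g₁)^[n] [true]) ((applyG g₂)^[m] [true])) := by
  have hpq : p ^ n = q ^ m := by rw [hpr, hqr, ← pow_mul, ← pow_mul, Nat.mul_comm]
  exact stmt13_general s t hs ht p q hp γ₁ γ₂ δ₁ δ₂ α β g₁ g₂ h₁a h₁b h₂a h₂b m n hm hn hpq
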